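/- Let 𝒢 denote the set of nondegenerate Gaussian laws on ℝ^d (arbitrary mean, positive-definite covariance) and 𝓛 the set of laws on ℝ^d with log-concave Lebesgue density; note 𝒢 ⊆ 𝓛. If a nonnegative adapted process {M_t} on Ω is a nonnegative supermartingale for P^∞ for every P ∈ 𝒢, then {M_t} is 𝚪-almost surely nonincreasing: 𝚪(∃ t ≥ 1 : M_t > M_{t−1}) = 0; if it is a nonnegative martingale for every P^∞ with P ∈ 𝒢, then 𝚪(∃ t ≥ 1 : M_t ≠ M_{t−1}) = 0. A fortiori, the same conclusions hold for processes that are nonnegative supermartingales (resp. martingales) for P^∞ for every P ∈ 𝓛. -/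

import Mathlib

open MeasureTheory ProbabilityTheory Filter Finset Matrix
open scoped Classical

noncomputable section

namespace SeqTest

/-- `ℝ^d`. -/
abbrev RV (d : ℕ) := Fin d → ℝ

/-- The sequence space `Ω = (ℝ^d)^ℕ`. -/
abbrev Seq (d : ℕ) := ℕ → RV d

variable (d : ℕ)


/-- The first `t` coordinates of a sequence. -/
def prefixMap (t : ℕ) : Seq d → (Fin t → RV d) := fun ω s => ω s

/-- The law of the first `t` coordinates under a sequential law `μ`. -/
def prefixLaw (μ : Measure (Seq d)) (t : ℕ) : Measure (Fin t → RV d) :=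
  μ.map (prefixMap d t)

/-- The natural filtration of the coordinate process: `ℱ t = σ(X_0, …, X_{t-1})`. -/
def F : Filtration ℕ (inferInstance : MeasurableSpace (Seq d)) where
  seq t := ⨆ s ∈ Finset.range t, MeasurableSpace.comap (fun ω : Seq d => ω s) inferInstance
  mono' := by
    intro i j hij
    exact biSup_mono fun s hs => Finset.mem_range.mpr
      (lt_of_lt_of_le (Finset.mem_range.mp hs) hij)
  le' := by
    intro t
    refine iSup₂_le fun s _ => ?_
    exact measurable_iff_comap_le.mp (measurable_pi_apply s)

/-- Local absolute continuity of sequential laws: every prefix law of `μ` is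
absolutely continuous w.r.t. the corresponding prefix law of `Γ`. -/
def LocAC (μ Γ : Measure (Seq d)) : Prop := ∀ t, prefixLaw d μ t ≪ prefixLaw d Γ t

/-- The density (likelihood-ratio) process `Z_t^μ = d(μ|_t)/d(Γ|_t)` evaluated along the path. -/
def Z (μ Γ : Measure (Seq d)) (t : ℕ) (ω : Seq d) : ℝ :=
  ((prefixLaw d μ t).rnDeriv (prefixLaw d Γ t) (prefixMap d t ω)).toReal

/-- The standard Gaussian measure on `ℝ^d`. -/
def stdGaussian : Measure (RV d) := Measure.pi fun _ => gaussianReal 0 1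

/-- `Γ` is the law of an i.i.d. sequence of standard Gaussians: characterized through its
finite-dimensional rectangle probabilities. -/
def IsGamma (Γ : Measure (Seq d)) : Prop :=
  IsProbabilityMeasure Γ ∧
    ∀ (t : ℕ) (A : Fin t → Set (RV d)), (∀ s, MeasurableSet (A s)) →
      prefixLaw d Γ t (Set.univ.pi A) = ∏ s, stdGaussian d (A s)

/-- `M` is a nonnegative supermartingale for the sequential law `μ`
(w.r.t. the natural filtration). -/
def IsNSM (μ : Measure (Seq d)) (M : ℕ → Seq d → ℝ) : Prop :=
  (∀ t ω, 0 ≤ M t ω) ∧ Supermartingale M (F d) μ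

/-- `M` is a nonnegative martingale for the sequential law `μ`. -/
def IsNM (μ : Measure (Seq d)) (M : ℕ → Seq d → ℝ) : Prop :=
  (∀ t ω, 0 ≤ M t ω) ∧ Martingale M (F d) μ


/-- `R` is the `(s,h)`-fork-convex combination of `P` with `Q` (relative to the
reference law `Γ`), described through its density process. -/
def IsFCC (Γ P Q : Measure (Seq d)) (s : ℕ) (h : Seq d → ℝ) (R : Measure (Seq d)) : Prop :=
  IsProbabilityMeasure P ∧ IsProbabilityMeasure Q ∧ LocAC d P Γ ∧ LocAC d Q Γ ∧
  Measurable[F d s] h ∧ (∀ ω, h ω ∈ Set.Icc (0 : ℝ) 1) ∧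
  Γ {ω | h ω < 1 ∧ Z d Q Γ s ω = 0} = 0 ∧
  IsProbabilityMeasure R ∧ LocAC d R Γ ∧
  ∀ t : ℕ, (fun ω => Z d R Γ t ω) =ᵐ[Γ]
    (fun ω => if t ≤ s then Z d P Γ t ω
      else h ω * Z d P Γ t ω + (1 - h ω) * Z d Q Γ t ω * (Z d P Γ s ω / Z d Q Γ s ω))

/-- A set of sequential laws is fork-convex if it is closed under fork-convex combinations. -/
def IsForkConvex (Γ : Measure (Seq d)) (S : Set (Measure (Seq d))) : Prop :=
  ∀ P ∈ S, ∀ Q ∈ S, ∀ (s : ℕ) (h : Seq d → ℝ) (R : Measure (Seq d)),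
    IsFCC d Γ P Q s h R → R ∈ S

/-- The fork-convex hull: the smallest fork-convex set containing `𝔓`. -/
def fconv (Γ : Measure (Seq d)) (𝔓 : Set (Measure (Seq d))) : Set (Measure (Seq d)) :=
  ⋂₀ {S | 𝔓 ⊆ S ∧ IsForkConvex d Γ S}

/-- Convergence of sequential laws: the density processes converge in `L¹(Γ)` at every fixed time. -/
def TendstoLocL1 (Γ : Measure (Seq d)) (Pn : ℕ → Measure (Seq d)) (P : Measure (Seq d)) : Prop :=
  ∀ t, Tendsto (fun n => ∫ ω, |Z d (Pn n) Γ t ω - Z d P Γ t ω| ∂Γ) atTop (nhds 0)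

/-- The closed fork-convex hull: the closure of the fork-convex hull under local `L¹(Γ)`
convergence of density processes. -/
def clfconv (Γ : Measure (Seq d)) (𝔓 : Set (Measure (Seq d))) : Set (Measure (Seq d)) :=
  {P | IsProbabilityMeasure P ∧ LocAC d P Γ ∧
    ∃ Pn : ℕ → Measure (Seq d), (∀ n, Pn n ∈ fconv d Γ 𝔓) ∧ TendstoLocL1 d Γ Pn P}

/-- `μ` is the law of an i.i.d. sequence with marginal `P`. -/
def IsIIDLaw (μ : Measure (Seq d)) (P : Measure (RV d)) : Prop :=
  IsProbabilityMeasure μ ∧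
    ∀ (t : ℕ) (A : Fin t → Set (RV d)), (∀ s, MeasurableSet (A s)) →
      prefixLaw d μ t (Set.univ.pi A) = ∏ s, P (A s)

/-- `μ` is the law of an independent sequence with marginals `Ps 0, Ps 1, …`. -/
def IsProductLaw (μ : Measure (Seq d)) (Ps : ℕ → Measure (RV d)) : Prop :=
  IsProbabilityMeasure μ ∧
    ∀ (t : ℕ) (A : Fin t → Set (RV d)), (∀ s, MeasurableSet (A s)) →
      prefixLaw d μ t (Set.univ.pi A) = ∏ s : Fin t, Ps s (A s)

/-- The set of i.i.d. sequential laws with marginals in `PP`. -/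
def iidLaws (PP : Set (Measure (RV d))) : Set (Measure (Seq d)) :=
  {μ | ∃ P ∈ PP, IsIIDLaw d μ P}

/-- The set of independent-product sequential laws with all marginals in `PP`. -/
def productLaws (PP : Set (Measure (RV d))) : Set (Measure (Seq d)) :=
  {μ | ∃ Ps : ℕ → Measure (RV d), (∀ t, Ps t ∈ PP) ∧ IsProductLaw d μ Ps}




/-- The density of the `d`-dimensional Gaussian with mean `m` and covariance matrix `S`. -/
def gaussDensityFn (m : RV d) (S : Matrix (Fin d) (Fin d) ℝ) (x : RV d) : ℝ :=
  (2 * Real.pi) ^ (-(d : ℝ) / 2) * S.det ^ (-(1 : ℝ) / 2) *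
    Real.exp (-(1 / 2) * ((x - m) ⬝ᵥ (S⁻¹ *ᵥ (x - m))))

/-- A finite mixture of nondegenerate Gaussian densities. -/
def IsGaussianMixture (g : RV d → ℝ) : Prop :=
  ∃ (k : ℕ) (α : Fin k → ℝ) (ms : Fin k → RV d) (Ss : Fin k → Matrix (Fin d) (Fin d) ℝ),
    (∀ i, 0 ≤ α i) ∧ (∑ i, α i = 1) ∧ (∀ i, (Ss i).PosDef) ∧
    g = fun x => ∑ i, α i * gaussDensityFn d (ms i) (Ss i) x

/-- A log-concave nonnegative function on `ℝ^d`. -/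
def IsLogConcaveFn (p : RV d → ℝ) : Prop :=
  (∀ x, 0 ≤ p x) ∧
    ∀ (x y : RV d) (l : ℝ), 0 ≤ l → l ≤ 1 →
      p x ^ l * p y ^ (1 - l) ≤ p (l • x + (1 - l) • y)

/-- A log-concave probability density on `ℝ^d`. -/
def IsLogConcaveDensity (p : RV d → ℝ) : Prop :=
  Measurable p ∧ IsLogConcaveFn d p ∧ ∫ x, p x = 1

/-- The set `𝓛` of laws on `ℝ^d` with a log-concave Lebesgue density. -/
def logConcaveLaws : Set (Measure (RV d)) :=
  {P | IsProbabilityMeasure P ∧ ∃ p : RV d → ℝ, Measurable p ∧ IsLogConcaveFn d p ∧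
    P = volume.withDensity fun x => ENNReal.ofReal (p x)}

/-- The set `𝒢` of nondegenerate Gaussian laws on `ℝ^d`. -/
def gaussianLaws : Set (Measure (RV d)) :=
  {P | ∃ (m : RV d) (S : Matrix (Fin d) (Fin d) ℝ), S.PosDef ∧
    P = volume.withDensity fun x => ENNReal.ofReal (gaussDensityFn d m S x)}

/-- An estimator sequence: a measurable family of (strictly positive) predictable
probability density estimates. -/
def IsEstimatorSeq (E : (t : ℕ) → (Fin t → RV d) → RV d → ℝ) : Prop :=
  (∀ t, Measurable fun q : (Fin t → RV d) × RV d => E t q.1 q.2) ∧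
  (∀ t h x, 0 < E t h x) ∧ (∀ t h, ∫ x, E t h x = 1)

/-- The universal likelihood ratio (ULR) process. Time `t` corresponds to having observed
the `t` samples `ω 0, …, ω (t-1)`. -/
def ULR (E : (t : ℕ) → (Fin t → RV d) → RV d → ℝ) (t : ℕ) (ω : Seq d) : ℝ :=
  if t ≤ d then 1 else
    (∏ j ∈ Finset.Ico d t, E j (fun i : Fin j => ω i) (ω j)) /
      ⨆ p : {p : RV d → ℝ // IsLogConcaveDensity d p}, ∏ j ∈ Finset.Ico d t, p.1 (ω j)

/-- The prediction (cumulative log-loss) regret of the estimator sequence `E` relative to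
the density of `P`. -/
def regret (P : Measure (RV d)) (E : (t : ℕ) → (Fin t → RV d) → RV d → ℝ)
    (t : ℕ) (ω : Seq d) : ℝ :=
  ∑ j ∈ Finset.range t,
    (Real.log ((P.rnDeriv volume (ω j)).toReal) - Real.log (E j (fun i : Fin j => ω i) (ω j)))

/-- The Hellinger distance between two laws on `ℝ^d` (via their Lebesgue densities). -/
def hellinger (P Q : Measure (RV d)) : ℝ :=
  Real.sqrt ((1 / 2) *
    ∫ x, (Real.sqrt ((P.rnDeriv volume x).toReal) - Real.sqrt ((Q.rnDeriv volume x).toReal)) ^ 2)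

/-- The Hellinger distance from `P` to the class of log-concave laws. -/
def dHLC (P : Measure (RV d)) : ℝ :=
  sInf {r | ∃ L ∈ logConcaveLaws d, r = hellinger d P L}

/-- The Kullback–Leibler divergence. -/
def klDivR {α : Type*} [MeasurableSpace α] (P Q : Measure α) : EReal :=
  if P ≪ Q ∧ Integrable (fun x => Real.log ((P.rnDeriv Q x).toReal)) P
  then ((∫ x, Real.log ((P.rnDeriv Q x).toReal) ∂P : ℝ) : EReal) else ⊤

/-- Membership in `𝒟₁`. -/
def MemD1 (P : Measure (RV d)) : Prop :=
  IsProbabilityMeasure P ∧ P ≪ volume ∧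
  Integrable (fun x => max 0 (Real.log ((P.rnDeriv volume x).toReal))) P ∧
  Integrable (fun x => Real.sqrt (∑ i, (x i) ^ 2)) P

/-- The log-likelihood gap `σ_t(P)` between the true density and the log-concave maximum
likelihood. -/
def sigmaT (P : Measure (RV d)) (t : ℕ) (ω : Seq d) : ℝ :=
  (∑ j ∈ Finset.range t, Real.log ((P.rnDeriv volume (ω j)).toReal)) -
    ⨆ p : {p : RV d → ℝ // IsLogConcaveDensity d p},
      ∑ j ∈ Finset.range t, Real.log (p.1 (ω j))

/-- The mean vector of `P`. -/
def meanVec (P : Measure (RV d)) : RV d := fun i => ∫ x, x i ∂P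

/-- `Δ_P = min_{‖v‖=1} E_P |⟨v, X − E_P X⟩|`. -/
def DeltaP (P : Measure (RV d)) : ℝ :=
  sInf {r | ∃ v : RV d, (∑ i, (v i) ^ 2) = 1 ∧
    r = ∫ x, |∑ i, v i * (x i - meanVec d P i)| ∂P}

/-- The class `𝒟_{Box,Lip,B}`: laws with a `1`-Lipschitz density supported on `[-1,1]^d`
taking values in `[1/B, B]` there. -/
def DBoxLip (B : ℝ) : Set (Measure (RV d)) :=
  {P | IsProbabilityMeasure P ∧ ∃ p : RV d → ℝ, Measurable p ∧
    P = volume.withDensity (fun x => ENNReal.ofReal (p x)) ∧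
    (∀ x, ¬ (∀ i, |x i| ≤ 1) → p x = 0) ∧
    (∀ x, (∀ i, |x i| ≤ 1) → 1 / B ≤ p x ∧ p x ≤ B) ∧
    (∀ x y, (∀ i, |x i| ≤ 1) → (∀ i, |y i| ≤ 1) →
      |p x - p y| ≤ Real.sqrt (∑ i, (x i - y i) ^ 2))}

/-!
Let `Z` have law `γ`, a law equivalent to Lebesgue measure (the standard Gaussian, in the theorem)
such that all the laws of `m + ε Z` are admissible marginals. Write `M (t + 1) = f (X, Y)` and
`M t = g Y`, with `X` the next observation and `Y` the past. The supermartingale property under the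
i.i.d. law with marginal `m + ε Z` says `E f (m + ε Z, y) ≤ g y` for almost every past `y`. All
these laws are equivalent, so the exceptional sets of pasts are Lebesgue null whatever `m` and `ε`,
and Fubini gives, for almost every `y`, the bound for almost every `m` and all `ε` in a sequence
tending to `0`. On an open set `U`, moving the average from `f` onto the indicator of `U` and
applying Fatou's lemma as `ε → 0` yields `∫ x in U, f (x, y) ≤ g y * volume U`; hence
`f (x, y) ≤ g y` almost everywhere. A martingale that is almost surely nonincreasing is constant
because its expectation is.
-/

section Pi

theorem lintegral_fin_nat_prod_eq_prod {n : ℕ} {X : Fin n → Type*} [∀ i, MeasurableSpace (X i)]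
    (μ : ∀ i, Measure (X i)) [∀ i, SigmaFinite (μ i)] {f : ∀ i, X i → ENNReal}
    (hf : ∀ i, Measurable (f i)) :
    ∫⁻ x, ∏ i, f i (x i) ∂Measure.pi μ = ∏ i, ∫⁻ x, f i x ∂μ i := by
  induction n with
  | zero => simp
  | succ n ih =>
    calc ∫⁻ x, ∏ i, f i (x i) ∂Measure.pi μ
        = ∫⁻ p : X 0 × (∀ i : Fin n, X i.succ), f 0 p.1 * ∏ i, f i.succ (p.2 i)
            ∂(μ 0).prod (Measure.pi fun i => μ i.succ) := by
          rw [← (measurePreserving_piFinSuccAbove μ 0).symm.lintegral_comp_emb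
            (MeasurableEquiv.measurableEmbedding _)]
          simp_rw [MeasurableEquiv.piFinSuccAbove_symm_apply, Fin.insertNthEquiv,
            Fin.prod_univ_succ, Fin.insertNth_zero, Equiv.coe_fn_mk, Fin.cons_zero, Fin.cons_succ]
          rfl
      _ = ∏ i, ∫⁻ x, f i x ∂μ i := by
          have hg : Measurable fun y : ∀ i : Fin n, X i.succ => ∏ i, f i.succ (y i) :=
            Finset.measurable_prod _ fun i _ => (hf i.succ).comp (measurable_pi_apply i)
          rw [lintegral_prod_mul (hf 0).aemeasurable hg.aemeasurable, ih _ fun i => hf i.succ,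
            Fin.prod_univ_succ]

variable {ι : Type*} [Fintype ι] {X : ι → Type*} [∀ i, MeasurableSpace (X i)]

theorem lintegral_fintype_prod_eq_prod (μ : ∀ i, Measure (X i)) [∀ i, SigmaFinite (μ i)]
    {f : ∀ i, X i → ENNReal} (hf : ∀ i, Measurable (f i)) :
    ∫⁻ x, ∏ i, f i (x i) ∂Measure.pi μ = ∏ i, ∫⁻ x, f i x ∂μ i := by
  let e := (Fintype.equivFin ι).symm
  rw [← (measurePreserving_piCongrLeft μ e).lintegral_comp_emb
    (MeasurableEquiv.measurableEmbedding _)]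
  simp_rw [← e.prod_comp, MeasurableEquiv.coe_piCongrLeft, Equiv.piCongrLeft_apply_apply]
  exact lintegral_fin_nat_prod_eq_prod _ fun i => hf (e i)

theorem pi_withDensity (μ : ∀ i, Measure (X i)) [∀ i, SigmaFinite (μ i)]
    {f : ∀ i, X i → ENNReal} (hf : ∀ i, Measurable (f i))
    [∀ i, SigmaFinite ((μ i).withDensity (f i))] :
    Measure.pi (fun i => (μ i).withDensity (f i)) =
      (Measure.pi μ).withDensity fun x => ∏ i, f i (x i) := by
  refine Measure.pi_eq fun s hs => ?_
  calc (Measure.pi μ).withDensity (fun x => ∏ i, f i (x i)) (Set.univ.pi s)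
      = ∫⁻ x, ∏ i, f i (x i) ∂Measure.pi fun i => (μ i).restrict (s i) := by
        rw [withDensity_apply _ (.univ_pi hs), Measure.restrict_pi_pi]
    _ = ∏ i, (μ i).withDensity (f i) (s i) := by
        simp only [lintegral_fintype_prod_eq_prod _ hf, withDensity_apply _ (hs _)]

theorem pi_absolutelyContinuous {μ ν : ∀ i, Measure (X i)} [∀ i, SigmaFinite (μ i)]
    [∀ i, SigmaFinite (ν i)] (h : ∀ i, μ i ≪ ν i) : Measure.pi μ ≪ Measure.pi ν := by
  have hμ : (fun i => (ν i).withDensity ((μ i).rnDeriv (ν i))) = μ :=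
    funext fun i => Measure.withDensity_rnDeriv_eq _ _ (h i)
  have (i : ι) : SigmaFinite ((ν i).withDensity ((μ i).rnDeriv (ν i))) :=
    (congrFun hμ i).symm ▸ inferInstance
  rw [← hμ, pi_withDensity ν fun i => Measure.measurable_rnDeriv _ _]
  exact withDensity_absolutelyContinuous _ _

end Pi

theorem map_withDensity_comp {X Y : Type*} [MeasurableSpace X] [MeasurableSpace Y] {μ : Measure X}
    {g : X → Y} (hg : Measurable g) {f : Y → ENNReal} (hf : Measurable f) :
    (μ.withDensity fun x => f (g x)).map g = (μ.map g).withDensity f := by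
  ext s hs
  rw [Measure.map_apply hg hs, withDensity_apply _ (hg hs), withDensity_apply _ hs,
    setLIntegral_map hs hf hg]

theorem ae_le_const_of_forall_isOpen_setLIntegral_le {X : Type*} [TopologicalSpace X]
    [MeasurableSpace X] (ν : Measure X) [ν.OuterRegular] [SigmaFinite ν] {f : X → ENNReal}
    (hf : Measurable f) {c : ENNReal} (h : ∀ U, IsOpen U → ∫⁻ x in U, f x ∂ν ≤ c * ν U) :
    ∀ᵐ x ∂ν, f x ≤ c := by
  rcases eq_or_ne c ⊤ with rfl | hc
  · simp
  have := Measure.OuterRegular.smul ν hc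
  refine ae_le_of_forall_setLIntegral_le_of_sigmaFinite hf (g := fun _ => c) fun s _ _ => ?_
  calc ∫⁻ x in s, f x ∂ν ≤ ⨅ (U) (_ : s ⊆ U) (_ : IsOpen U), (c • ν) U :=
        le_iInf₂ fun U hsU => le_iInf fun hU => (lintegral_mono_set hsU).trans (h U hU)
    _ = ∫⁻ _ in s, c ∂ν := by rw [← s.measure_eq_iInf_isOpen]; simp

theorem ae_eq_of_martingale_of_ae_le {Ω ι : Type*} {m : MeasurableSpace Ω} [Preorder ι]
    {μ : Measure Ω} {ℱ : Filtration ι m} [SigmaFiniteFiltration μ ℱ] {M : ι → Ω → ℝ}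
    (hM : Martingale M ℱ μ) {i j : ι} (hij : i ≤ j) (hle : M j ≤ᵐ[μ] M i) : M j =ᵐ[μ] M i := by
  refine (integral_eq_iff_of_ae_le (hM.integrable j) (hM.integrable i) hle).1 ?_
  simpa using (hM.setIntegral_eq hij MeasurableSet.univ).symm

section Matrix

variable {ι : Type*} [Fintype ι]

open scoped MatrixOrder in
theorem posDef_iff_exists_det_ne_zero_eq_mul_transpose [DecidableEq ι] {S : Matrix ι ι ℝ} :
    S.PosDef ↔ ∃ A : Matrix ι ι ℝ, A.det ≠ 0 ∧ S = A * Aᵀ := by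
  rw [← Matrix.isStrictlyPositive_iff_posDef,
    CStarAlgebra.isStrictlyPositive_iff_eq_mul_star_self]
  simp only [Matrix.isUnit_iff_isUnit_det, isUnit_iff_ne_zero, Matrix.star_eq_conjTranspose,
    Matrix.conjTranspose_eq_transpose_of_trivial]

theorem convexOn_dotProduct_mulVec_of_posSemidef {T : Matrix ι ι ℝ}
    (hT : T.PosSemidef) : ConvexOn ℝ Set.univ fun x : ι → ℝ => x ⬝ᵥ (T *ᵥ x) := by
  refine ⟨convex_univ, fun x _ y _ a b ha hb hab => ?_⟩
  have hdiff : 0 ≤ (x - y) ⬝ᵥ (T *ᵥ (x - y)) := by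
    simpa using hT.dotProduct_mulVec_nonneg (x - y)
  obtain rfl : b = 1 - a := by linarith
  simp only [Matrix.mulVec_add, Matrix.mulVec_sub, Matrix.mulVec_smul, dotProduct_add,
    dotProduct_sub, add_dotProduct, sub_dotProduct, dotProduct_smul, smul_dotProduct,
    smul_eq_mul] at hdiff ⊢
  nlinarith [mul_nonneg (mul_nonneg ha hb) hdiff]

theorem map_affine_volume [DecidableEq ι] (m : ι → ℝ) {A : Matrix ι ι ℝ} (hA : A.det ≠ 0) :
    (volume : Measure (ι → ℝ)).map (fun z => m + A *ᵥ z) =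
      ENNReal.ofReal |A.det|⁻¹ • (volume : Measure (ι → ℝ)) := by
  have hmap := Real.map_matrix_volume_pi_eq_smul_volume_pi hA
  calc (volume : Measure (ι → ℝ)).map (fun z => m + A *ᵥ z)
      = ((volume : Measure (ι → ℝ)).map (Matrix.toLin' A)).map (m + ·) :=
        (Measure.map_map (measurable_const_add m)
          (Matrix.toLin' A).continuous_of_finiteDimensional.measurable).symm
    _ = ENNReal.ofReal |A.det|⁻¹ • (volume : Measure (ι → ℝ)) := by
        rw [hmap, Measure.map_smul, map_add_left_eq_self, abs_inv]

end Matrix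

section ScaledTranslate

variable {E : Type*} [NormedAddCommGroup E] [NormedSpace ℝ E] [MeasurableSpace E]

/-- The law of `m + r • Z` when `Z` has law `γ`. For small `r` it is an approximation of the Dirac
mass at `m`, against which the one-step supermartingale inequality is tested. -/
def scaledTranslate (γ : Measure E) (m : E) (r : ℝ) : Measure E :=
  γ.map fun z => m + r • z

theorem scaledTranslate_zero_one (γ : Measure E) : scaledTranslate γ 0 1 = γ := by
  simp [scaledTranslate]

variable [BorelSpace E]

instance isProbabilityMeasure_scaledTranslate (γ : Measure E) [IsProbabilityMeasure γ] (m : E)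
    (r : ℝ) : IsProbabilityMeasure (scaledTranslate γ m r) :=
  Measure.isProbabilityMeasure_map (by fun_prop)

theorem lintegral_scaledTranslate (γ : Measure E) (m : E) (r : ℝ) {f : E → ENNReal}
    (hf : Measurable f) : ∫⁻ x, f x ∂scaledTranslate γ m r = ∫⁻ z, f (m + r • z) ∂γ :=
  lintegral_map hf (by fun_prop)

theorem one_le_liminf_scaledTranslate_of_mem_of_isOpen (γ : Measure E) [IsProbabilityMeasure γ]
    {ε : ℕ → ℝ} (hε : Tendsto ε atTop (nhds 0)) {U : Set E} (hU : IsOpen U) {m : E} (hm : m ∈ U) :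
    1 ≤ liminf (fun n => scaledTranslate γ m (ε n) U) atTop := by
  have hind : Measurable (U.indicator (1 : E → ENNReal)) :=
    measurable_one.indicator hU.measurableSet
  have hone (z : E) : 1 ≤ liminf (fun n => U.indicator (1 : E → ENNReal) (m + ε n • z)) atTop := by
    have hlim : Tendsto (fun n => m + ε n • z) atTop (nhds m) := by
      simpa using tendsto_const_nhds.add (hε.smul_const z)
    refine le_liminf_of_le (by isBoundedDefault) ?_
    filter_upwards [hlim.eventually (hU.mem_nhds hm)] with n hn
    simp [Set.indicator_of_mem hn]
  calc 1 ≤ ∫⁻ z, liminf (fun n => U.indicator (1 : E → ENNReal) (m + ε n • z)) atTop ∂γ := by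
        simpa using lintegral_mono (μ := γ) hone
    _ ≤ liminf (fun n => ∫⁻ z, U.indicator 1 (m + ε n • z) ∂γ) atTop :=
        lintegral_liminf_le fun n => hind.comp (by fun_prop)
    _ = liminf (fun n => scaledTranslate γ m (ε n) U) atTop := by
        simp only [← lintegral_scaledTranslate γ m _ hind, lintegral_indicator_one hU.measurableSet]

section SecondCountable

variable [SecondCountableTopology E]

theorem measurable_scaledTranslate (γ : Measure E) [SFinite γ] (r : ℝ) :
    Measurable fun m => scaledTranslate γ m r := by
  refine Measure.measurable_of_measurable_coe _ fun s hs => ?_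
  have hpre (m : E) : scaledTranslate γ m r s = γ (Prod.mk m ⁻¹' {p | p.1 + r • p.2 ∈ s}) :=
    Measure.map_apply (by fun_prop) hs
  simp only [hpre]
  exact measurable_measure_prodMk_left (hs.preimage (by fun_prop))

theorem measurable_lintegral_scaledTranslate {Y : Type*} [MeasurableSpace Y] (γ : Measure E)
    [SFinite γ] (r : ℝ) {f : E × Y → ENNReal} (hf : Measurable f) :
    Measurable fun p : E × Y => ∫⁻ x, f (x, p.2) ∂scaledTranslate γ p.1 r := by
  have hint (p : E × Y) : ∫⁻ x, f (x, p.2) ∂scaledTranslate γ p.1 r =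
      ∫⁻ z, f (p.1 + r • z, p.2) ∂γ :=
    lintegral_scaledTranslate γ p.1 r (by fun_prop)
  simp only [hint]
  exact Measurable.lintegral_prod_right'
    (f := fun q : (E × Y) × E => f (q.1.1 + r • q.2, q.1.2)) (by fun_prop)

theorem setLIntegral_lintegral_scaledTranslate (ν : Measure E) [SFinite ν] [ν.IsAddRightInvariant]
    (γ : Measure E) [SFinite γ] (r : ℝ) {s : Set E} (hs : MeasurableSet s) {f : E → ENNReal}
    (hf : Measurable f) :
    ∫⁻ x in s, ∫⁻ y, f y ∂scaledTranslate γ x r ∂ν =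
      ∫⁻ y, scaledTranslate γ y (-r) s * f y ∂ν := by
  have hind : Measurable (s.indicator (1 : E → ENNReal)) := measurable_one.indicator hs
  calc ∫⁻ x in s, ∫⁻ y, f y ∂scaledTranslate γ x r ∂ν
      = ∫⁻ x, ∫⁻ z, s.indicator 1 x * f (x + r • z) ∂γ ∂ν := by
        rw [← lintegral_indicator hs]
        refine lintegral_congr fun x => ?_
        rw [lintegral_const_mul _ (by fun_prop), ← lintegral_scaledTranslate γ x r hf]
        by_cases hx : x ∈ s <;> simp [hx]
    _ = ∫⁻ z, ∫⁻ x, s.indicator 1 x * f (x + r • z) ∂ν ∂γ :=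
        lintegral_lintegral_swap
          ((hind.comp measurable_fst).mul (hf.comp (by fun_prop))).aemeasurable
    _ = ∫⁻ z, ∫⁻ y, s.indicator 1 (y + -r • z) * f y ∂ν ∂γ := by
        refine lintegral_congr fun z => ?_
        rw [← lintegral_add_right_eq_self _ (-r • z)]
        simp
    _ = ∫⁻ y, ∫⁻ z, s.indicator 1 (y + -r • z) * f y ∂γ ∂ν :=
        lintegral_lintegral_swap
          ((hind.comp (by fun_prop)).mul (hf.comp measurable_snd)).aemeasurable
    _ = ∫⁻ y, scaledTranslate γ y (-r) s * f y ∂ν := by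
        refine lintegral_congr fun y => ?_
        rw [lintegral_mul_const (f := fun z => s.indicator (1 : E → ENNReal) (y + -r • z)) _
            (hind.comp (by fun_prop)),
          ← lintegral_scaledTranslate γ y (-r) hind, lintegral_indicator_one hs]

theorem setLIntegral_le_of_ae_lintegral_scaledTranslate_le (ν : Measure E) [SFinite ν]
    [ν.IsAddRightInvariant] (γ : Measure E) [IsProbabilityMeasure γ] {f : E → ENNReal}
    (hf : Measurable f) {c : ENNReal} {ε : ℕ → ℝ} (hε : Tendsto ε atTop (nhds 0))
    (h : ∀ n, ∀ᵐ m ∂ν, ∫⁻ x, f x ∂scaledTranslate γ m (ε n) ≤ c) {U : Set E} (hU : IsOpen U) :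
    ∫⁻ x in U, f x ∂ν ≤ c * ν U := by
  have hε' : Tendsto (fun n => -ε n) atTop (nhds 0) := by simpa using hε.neg
  calc ∫⁻ x in U, f x ∂ν
      ≤ ∫⁻ y, liminf (fun n => scaledTranslate γ y (-ε n) U * f y) atTop ∂ν := by
        rw [← lintegral_indicator hU.measurableSet]
        refine lintegral_mono fun y => ?_
        by_cases hy : y ∈ U
        · calc U.indicator f y = 1 * liminf (fun _ : ℕ => f y) atTop := by simp [hy]
            _ ≤ liminf (fun n => scaledTranslate γ y (-ε n) U) atTop *
                liminf (fun _ => f y) atTop :=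
              mul_le_mul_left
                (one_le_liminf_scaledTranslate_of_mem_of_isOpen γ hε' hU hy) _
            _ ≤ liminf (fun n => scaledTranslate γ y (-ε n) U * f y) atTop :=
              ENNReal.le_liminf_mul
        · simp [hy]
    _ ≤ liminf (fun n => ∫⁻ y, scaledTranslate γ y (-ε n) U * f y ∂ν) atTop :=
        lintegral_liminf_le fun n => ((Measure.measurable_coe hU.measurableSet).comp
          (measurable_scaledTranslate γ _)).mul hf
    _ = liminf (fun n => ∫⁻ x in U, ∫⁻ y, f y ∂scaledTranslate γ x (ε n) ∂ν) atTop := by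
        simp only [setLIntegral_lintegral_scaledTranslate ν γ _ hU.measurableSet hf]
    _ ≤ c * ν U := by
        refine liminf_le_of_frequently_le' (Frequently.of_forall fun n => ?_)
        simpa using lintegral_mono_ae (ae_restrict_of_ae (s := U) (h n))

end SecondCountable

variable [FiniteDimensional ℝ E]

theorem absolutelyContinuous_scaledTranslate (ν : Measure E) [ν.IsAddHaarMeasure] {γ : Measure E}
    (h : ν ≪ γ) (m : E) {r : ℝ} (hr : r ≠ 0) : ν ≪ scaledTranslate γ m r := by
  have hmap : scaledTranslate ν m r = ENNReal.ofReal |(r ^ Module.finrank ℝ E)⁻¹| • ν := by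
    calc scaledTranslate ν m r = (ν.map (r • ·)).map (m + ·) :=
          (Measure.map_map (measurable_const_add m) (measurable_const_smul r)).symm
      _ = ENNReal.ofReal |(r ^ Module.finrank ℝ E)⁻¹| • ν := by
        rw [Measure.map_addHaar_smul ν hr, Measure.map_smul, map_add_left_eq_self]
  have hν : ν ≪ scaledTranslate ν m r := by
    rw [hmap]
    exact Measure.absolutelyContinuous_smul (by positivity)
  exact hν.trans (h.map (by fun_prop))

theorem ae_le_const_of_forall_ae_lintegral_scaledTranslate_le (ν : Measure E) [ν.IsAddHaarMeasure]
    (γ : Measure E) [IsProbabilityMeasure γ] {f : E → ENNReal} (hf : Measurable f) {c : ENNReal}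
    {ε : ℕ → ℝ} (hε : Tendsto ε atTop (nhds 0))
    (h : ∀ n, ∀ᵐ m ∂ν, ∫⁻ x, f x ∂scaledTranslate γ m (ε n) ≤ c) : ∀ᵐ x ∂ν, f x ≤ c :=
  ae_le_const_of_forall_isOpen_setLIntegral_le ν hf fun _ hU =>
    setLIntegral_le_of_ae_lintegral_scaledTranslate_le ν γ hf hε h hU

theorem ae_prod_le_of_forall_ae_lintegral_scaledTranslate_le {Y : Type*} [MeasurableSpace Y]
    (ν : Measure E) [ν.IsAddHaarMeasure] (ρ : Measure Y) [SFinite ρ]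
    (γ : Measure E) [IsProbabilityMeasure γ] {f : E × Y → ENNReal} (hf : Measurable f)
    {g : Y → ENNReal} (hg : Measurable g) {ε : ℕ → ℝ} (hε : Tendsto ε atTop (nhds 0))
    (h : ∀ n m, ∀ᵐ y ∂ρ, ∫⁻ x, f (x, y) ∂scaledTranslate γ m (ε n) ≤ g y) :
    ∀ᵐ p ∂ν.prod ρ, f p ≤ g p.2 := by
  have hmeas (n : ℕ) : MeasurableSet {p : E × Y |
      ∫⁻ x, f (x, p.2) ∂scaledTranslate γ p.1 (ε n) ≤ g p.2} :=
    measurableSet_le (measurable_lintegral_scaledTranslate γ (ε n) hf) (by fun_prop)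
  have hswap : ∀ᵐ y ∂ρ, ∀ n, ∀ᵐ m ∂ν, ∫⁻ x, f (x, y) ∂scaledTranslate γ m (ε n) ≤ g y :=
    ae_all_iff.2 fun n => (Measure.ae_ae_comm (hmeas n)).1 (ae_of_all ν (h n))
  have hle : ∀ᵐ y ∂ρ, ∀ᵐ x ∂ν, f (x, y) ≤ g y := by
    filter_upwards [hswap] with y hy
    exact ae_le_const_of_forall_ae_lintegral_scaledTranslate_le ν γ (by fun_prop) hε hy
  have hset : MeasurableSet {p : E × Y | f p ≤ g p.2} := measurableSet_le hf (by fun_prop)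
  exact (Measure.ae_prod_iff_ae_ae hset).2 ((Measure.ae_ae_comm hset).2 hle)

end ScaledTranslate

section Gaussian

variable {d}

theorem measurable_gaussDensityFn (m : RV d) (S : Matrix (Fin d) (Fin d) ℝ) :
    Measurable (gaussDensityFn d m S) := by
  unfold gaussDensityFn
  refine Continuous.measurable ?_
  fun_prop

theorem gaussDensityFn_zero_one_eq_prod (x : RV d) :
    gaussDensityFn d 0 1 x = ∏ i, gaussianPDFReal 0 1 (x i) := by
  have hconst : (2 * Real.pi) ^ (-(d : ℝ) / 2) = (√(2 * Real.pi))⁻¹ ^ d := by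
    rw [Real.sqrt_eq_rpow, ← Real.rpow_neg (by positivity), ← Real.rpow_natCast,
      ← Real.rpow_mul (by positivity)]
    ring_nf
  have hexp : ∏ i, Real.exp (-x i ^ 2 / 2) = Real.exp (-(1 / 2) * (x ⬝ᵥ x)) := by
    rw [← Real.exp_sum, dotProduct, Finset.mul_sum]
    congr! 2 with i
    ring
  simp [gaussDensityFn, gaussianPDFReal, Finset.prod_mul_distrib, hconst, hexp]

instance isProbabilityMeasure_stdGaussian : IsProbabilityMeasure (stdGaussian d) := by
  unfold stdGaussian
  infer_instance

theorem stdGaussian_eq_withDensity :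
    stdGaussian d = volume.withDensity fun x => ENNReal.ofReal (gaussDensityFn d 0 1 x) := by
  have hpdf : gaussianReal 0 1 = volume.withDensity (gaussianPDF 0 1) :=
    gaussianReal_of_var_ne_zero 0 one_ne_zero
  have : SigmaFinite ((volume : Measure ℝ).withDensity (gaussianPDF 0 1)) :=
    hpdf ▸ inferInstance
  simp only [gaussDensityFn_zero_one_eq_prod,
    ENNReal.ofReal_prod_of_nonneg fun _ _ => gaussianPDFReal_nonneg _ _ _]
  rw [stdGaussian, hpdf, pi_withDensity _ fun _ => measurable_gaussianPDF _ _]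
  rfl

theorem stdGaussian_absolutelyContinuous_volume : stdGaussian d ≪ volume :=
  stdGaussian_eq_withDensity (d := d) ▸ withDensity_absolutelyContinuous _ _

theorem volume_absolutelyContinuous_stdGaussian : volume ≪ stdGaussian d := by
  rw [stdGaussian_eq_withDensity]
  refine withDensity_absolutelyContinuous'
    (measurable_gaussDensityFn 0 1).ennreal_ofReal.aemeasurable (ae_of_all _ fun x => ?_)
  have hpos : 0 < gaussDensityFn d 0 1 x := by
    rw [gaussDensityFn_zero_one_eq_prod]
    exact Finset.prod_pos fun i _ => gaussianPDFReal_pos _ _ _ one_ne_zero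
  simpa using hpos

theorem gaussDensityFn_mul_transpose_comp_affine (m : RV d) {A : Matrix (Fin d) (Fin d) ℝ}
    (hA : A.det ≠ 0) (z : RV d) :
    gaussDensityFn d m (A * Aᵀ) (m + A *ᵥ z) = |A.det|⁻¹ * gaussDensityFn d 0 1 z := by
  have hdet : (A * Aᵀ).det ^ (-(1 : ℝ) / 2) = |A.det|⁻¹ := by
    rw [Matrix.det_mul, Matrix.det_transpose, ← sq, neg_div, Real.rpow_neg (sq_nonneg _),
      ← Real.sqrt_eq_rpow, Real.sqrt_sq_eq_abs]
  have hquad : (A *ᵥ z) ⬝ᵥ ((A * Aᵀ)⁻¹ *ᵥ (A *ᵥ z)) = z ⬝ᵥ z := by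
    have hu : IsUnit A.det := hA.isUnit
    rw [Matrix.mul_inv_rev, ← Matrix.mulVec_mulVec, Matrix.mulVec_mulVec z A⁻¹,
      Matrix.nonsing_inv_mul A hu, Matrix.one_mulVec, ← Matrix.transpose_nonsing_inv,
      Matrix.dotProduct_mulVec, Matrix.vecMul_transpose, Matrix.mulVec_mulVec,
      Matrix.nonsing_inv_mul A hu, Matrix.one_mulVec]
  simp only [gaussDensityFn, add_sub_cancel_left, hdet, hquad, Matrix.det_one, Real.one_rpow,
    sub_zero, inv_one, Matrix.one_mulVec]
  ring

theorem stdGaussian_map_affine (m : RV d) {A : Matrix (Fin d) (Fin d) ℝ} (hA : A.det ≠ 0) :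
    (stdGaussian d).map (fun z => m + A *ᵥ z) =
      volume.withDensity fun x => ENNReal.ofReal (gaussDensityFn d m (A * Aᵀ) x) := by
  have hdens (z : RV d) : ENNReal.ofReal (gaussDensityFn d 0 1 z) =
      ENNReal.ofReal |A.det| * ENNReal.ofReal (gaussDensityFn d m (A * Aᵀ) (m + A *ᵥ z)) := by
    rw [← ENNReal.ofReal_mul (abs_nonneg _), gaussDensityFn_mul_transpose_comp_affine m hA,
      mul_inv_cancel_left₀ (abs_ne_zero.2 hA)]
  have hmeas := (measurable_gaussDensityFn m (A * Aᵀ)).ennreal_ofReal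
  rw [stdGaussian_eq_withDensity]
  simp only [hdens]
  rw [map_withDensity_comp (f := fun x => ENNReal.ofReal |A.det| *
      ENNReal.ofReal (gaussDensityFn d m (A * Aᵀ) x)) (by fun_prop) (hmeas.const_mul _),
    map_affine_volume m hA, withDensity_smul_measure, ← withDensity_smul _ (hmeas.const_mul _)]
  congr 1 with x
  rw [Pi.smul_apply, smul_eq_mul, ← mul_assoc, ← ENNReal.ofReal_mul (by positivity),
    inv_mul_cancel₀ (abs_ne_zero.2 hA), ENNReal.ofReal_one, one_mul]

theorem mem_gaussianLaws_iff_exists_map_affine {P : Measure (RV d)} :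
    P ∈ gaussianLaws d ↔ ∃ (m : RV d) (A : Matrix (Fin d) (Fin d) ℝ), A.det ≠ 0 ∧
      P = (stdGaussian d).map fun z => m + A *ᵥ z := by
  constructor
  · rintro ⟨m, S, hS, rfl⟩
    obtain ⟨A, hA, rfl⟩ := posDef_iff_exists_det_ne_zero_eq_mul_transpose.1 hS
    exact ⟨m, A, hA, (stdGaussian_map_affine m hA).symm⟩
  · rintro ⟨m, A, hA, rfl⟩
    exact ⟨m, A * Aᵀ, posDef_iff_exists_det_ne_zero_eq_mul_transpose.2 ⟨A, hA, rfl⟩,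
      stdGaussian_map_affine m hA⟩

theorem isProbabilityMeasure_of_mem_gaussianLaws {P : Measure (RV d)} (hP : P ∈ gaussianLaws d) :
    IsProbabilityMeasure P := by
  obtain ⟨m, A, -, rfl⟩ := mem_gaussianLaws_iff_exists_map_affine.1 hP
  exact Measure.isProbabilityMeasure_map (by fun_prop)

theorem scaledTranslate_stdGaussian_mem_gaussianLaws (m : RV d) {r : ℝ} (hr : r ≠ 0) :
    scaledTranslate (stdGaussian d) m r ∈ gaussianLaws d :=
  mem_gaussianLaws_iff_exists_map_affine.2
    ⟨m, r • 1, by simp [hr], by simp [scaledTranslate, Matrix.smul_mulVec]⟩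

theorem isLogConcaveFn_const_mul_exp {C : ℝ} (hC : 0 ≤ C) {g : RV d → ℝ}
    (hg : ConcaveOn ℝ Set.univ g) : IsLogConcaveFn d fun x => C * Real.exp (g x) := by
  refine ⟨fun x => by positivity, fun x y l h0 h1 => ?_⟩
  calc (C * Real.exp (g x)) ^ l * (C * Real.exp (g y)) ^ (1 - l)
      = C ^ l * C ^ (1 - l) * (Real.exp (g x) ^ l * Real.exp (g y) ^ (1 - l)) := by
        rw [Real.mul_rpow hC (Real.exp_nonneg _), Real.mul_rpow hC (Real.exp_nonneg _),
          mul_mul_mul_comm]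
    _ = C * Real.exp (l • g x + (1 - l) • g y) := by
        rw [← Real.rpow_add_of_nonneg hC h0 (sub_nonneg.2 h1), ← Real.exp_mul, ← Real.exp_mul,
          ← Real.exp_add]
        simp [mul_comm]
    _ ≤ C * Real.exp (g (l • x + (1 - l) • y)) := by
        gcongr
        exact hg.2 trivial trivial h0 (sub_nonneg.2 h1) (add_sub_cancel _ _)

theorem isLogConcaveFn_gaussDensityFn (m : RV d) {S : Matrix (Fin d) (Fin d) ℝ} (hS : S.PosDef) :
    IsLogConcaveFn d (gaussDensityFn d m S) := by
  have hquad : ConvexOn ℝ Set.univ fun x : RV d => (x - m) ⬝ᵥ (S⁻¹ *ᵥ (x - m)) :=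
    (convexOn_dotProduct_mulVec_of_posSemidef hS.inv.posSemidef).translate_left (-m)
  have hexponent : ConcaveOn ℝ Set.univ fun x : RV d =>
      -(1 / 2) * ((x - m) ⬝ᵥ (S⁻¹ *ᵥ (x - m))) :=
    (hquad.smul (by norm_num : (0 : ℝ) ≤ 1 / 2)).neg.congr fun _ _ => (neg_mul _ _).symm
  have hdet := hS.det_pos
  exact isLogConcaveFn_const_mul_exp (by positivity) hexponent

theorem gaussianLaws_subset_logConcaveLaws : gaussianLaws d ⊆ logConcaveLaws d := by
  intro P hP
  have hprob := isProbabilityMeasure_of_mem_gaussianLaws hP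
  obtain ⟨m, S, hS, rfl⟩ := hP
  exact ⟨hprob, _, measurable_gaussDensityFn m S, isLogConcaveFn_gaussDensityFn m hS, rfl⟩

end Gaussian

section CoordinateProcess

variable {d}

/-- The coordinate of index `t` paired with the `t` earlier ones: the splitting of the information
at time `t + 1` into the new observation and the past. -/
def nextAndPrefix (t : ℕ) : Seq d → RV d × (Fin t → RV d) := fun ω => (ω t, prefixMap d t ω)

theorem measurable_prefixMap (t : ℕ) : Measurable (prefixMap d t) :=
  measurable_pi_lambda _ fun s => measurable_pi_apply s.1

theorem F_eq_comap_prefixMap (t : ℕ) :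
    (F d t : MeasurableSpace (Seq d)) = MeasurableSpace.comap (prefixMap d t) inferInstance := by
  change (⨆ s ∈ Finset.range t, MeasurableSpace.comap (fun ω : Seq d => ω s) inferInstance) =
    MeasurableSpace.comap (prefixMap d t) (⨆ i, MeasurableSpace.comap (fun x => x i) inferInstance)
  simp only [MeasurableSpace.comap_iSup, MeasurableSpace.comap_comp]
  refine le_antisymm (iSup₂_le fun s hs => ?_) (iSup_le fun i => ?_)
  · exact le_iSup (fun i : Fin t => MeasurableSpace.comap
      ((fun x : Fin t → RV d => x i) ∘ prefixMap d t) inferInstance) ⟨s, Finset.mem_range.mp hs⟩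
  · exact le_iSup₂ (f := fun s (_ : s ∈ Finset.range t) =>
      MeasurableSpace.comap (fun ω : Seq d => ω s) inferInstance) i.1 (Finset.mem_range.mpr i.2)

theorem F_succ_eq_comap_nextAndPrefix (t : ℕ) :
    (F d (t + 1) : MeasurableSpace (Seq d)) =
      MeasurableSpace.comap (nextAndPrefix t) inferInstance := by
  have hsucc : (F d (t + 1) : MeasurableSpace (Seq d)) =
      MeasurableSpace.comap (fun ω => ω t) inferInstance ⊔ F d t := by
    change (⨆ s ∈ Finset.range (t + 1), _) = _ ⊔ ⨆ s ∈ Finset.range t, _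
    rw [Finset.range_add_one, Finset.iSup_insert]
  rw [hsucc, F_eq_comap_prefixMap]
  exact (MeasurableSpace.comap_prodMk _ _).symm

theorem exists_measurable_eq_comp_prefixMap {M : ℕ → Seq d → ℝ} {t : ℕ}
    (hM : StronglyMeasurable[F d t] (M t)) :
    ∃ g : (Fin t → RV d) → ℝ, Measurable g ∧ M t = g ∘ prefixMap d t := by
  rw [F_eq_comap_prefixMap] at hM
  exact hM.measurable.exists_eq_measurable_comp

theorem exists_measurable_eq_comp_nextAndPrefix {M : ℕ → Seq d → ℝ} {t : ℕ}
    (hM : StronglyMeasurable[F d (t + 1)] (M (t + 1))) :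
    ∃ f : RV d × (Fin t → RV d) → ℝ, Measurable f ∧ M (t + 1) = f ∘ nextAndPrefix t := by
  rw [F_succ_eq_comap_nextAndPrefix] at hM
  exact hM.measurable.exists_eq_measurable_comp

variable {μ : Measure (Seq d)} {P : Measure (RV d)}

theorem IsIIDLaw.isProbabilityMeasure_marginal (hμ : IsIIDLaw d μ P) : IsProbabilityMeasure P := by
  have := hμ.1
  have : IsProbabilityMeasure (prefixLaw d μ 1) :=
    Measure.isProbabilityMeasure_map (measurable_prefixMap 1).aemeasurable
  exact ⟨by simpa using (hμ.2 1 (fun _ => Set.univ) fun _ => .univ).symm⟩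

theorem IsIIDLaw.measurePreserving_prefixMap (hμ : IsIIDLaw d μ P) (t : ℕ) :
    MeasurePreserving (prefixMap d t) μ (Measure.pi fun _ => P) :=
  have := hμ.isProbabilityMeasure_marginal
  ⟨measurable_prefixMap t, (Measure.pi_eq (hμ.2 t)).symm⟩

theorem IsIIDLaw.measurePreserving_nextAndPrefix (hμ : IsIIDLaw d μ P) (t : ℕ) :
    MeasurePreserving (nextAndPrefix t) μ (P.prod (Measure.pi fun _ => P)) := by
  have := hμ.isProbabilityMeasure_marginal
  have hsplit : nextAndPrefix t =
      MeasurableEquiv.piFinSuccAbove (fun _ => RV d) (Fin.last t) ∘ prefixMap d (t + 1) := by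
    funext ω
    refine Prod.ext ?_ (funext fun i => ?_) <;>
      simp [nextAndPrefix, prefixMap, MeasurableEquiv.piFinSuccAbove, Fin.insertNthEquiv, Fin.init]
  rw [hsplit]
  exact (measurePreserving_piFinSuccAbove (fun _ => P) (Fin.last t)).comp
    (hμ.measurePreserving_prefixMap (t + 1))

theorem isIIDLaw_infinitePi (P : Measure (RV d)) [IsProbabilityMeasure P] :
    IsIIDLaw d (Measure.infinitePi fun _ => P) P := by
  refine ⟨inferInstance, fun t A _ => ?_⟩
  have hindep : iIndepFun (fun (s : Fin t) (ω : Seq d) => ω s) (Measure.infinitePi fun _ => P) :=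
    (iIndepFun_infinitePi (X := fun _ x => x) fun _ => measurable_id).precomp Fin.val_injective
  have hlaw : prefixLaw d (Measure.infinitePi fun _ => P) t = Measure.pi fun _ => P :=
    ((iIndepFun_iff_map_fun_eq_pi_map fun s : Fin t =>
      (measurable_pi_apply s.1).aemeasurable).1 hindep).trans
        (by simp only [Measure.infinitePi_map_eval])
  rw [hlaw, Measure.pi_pi]

theorem IsNSM.ae_lintegral_next_le {M : ℕ → Seq d → ℝ} (hM : IsNSM d μ M) (hμ : IsIIDLaw d μ P)
    {t : ℕ} {f : RV d × (Fin t → RV d) → ℝ} (hf : Measurable f)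
    (hfM : M (t + 1) = f ∘ nextAndPrefix t) {g : (Fin t → RV d) → ℝ} (hg : Measurable g)
    (hgM : M t = g ∘ prefixMap d t) :
    ∀ᵐ y ∂Measure.pi fun _ => P, ∫⁻ x, ENNReal.ofReal (f (x, y)) ∂P ≤ ENNReal.ofReal (g y) := by
  have := hμ.1
  have := hμ.isProbabilityMeasure_marginal
  have hint (k : ℕ) (s : Set (Seq d)) :
      ENNReal.ofReal (∫ ω in s, M k ω ∂μ) = ∫⁻ ω in s, ENNReal.ofReal (M k ω) ∂μ :=
    ofReal_integral_eq_lintegral_ofReal (hM.2.integrable k).integrableOn (ae_of_all _ (hM.1 k))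
  refine ae_le_of_forall_setLIntegral_le_of_sigmaFinite
    (Measurable.lintegral_prod_left' hf.ennreal_ofReal)
    fun s hs _ => ?_
  have hpast : MeasurableSet[F d t] (prefixMap d t ⁻¹' s) := by
    rw [F_eq_comap_prefixMap]
    exact ⟨s, hs, rfl⟩
  have hcyl : prefixMap d t ⁻¹' s = nextAndPrefix t ⁻¹' (Set.univ ×ˢ s) := by
    ext ω
    simp [nextAndPrefix]
  calc ∫⁻ y in s, ∫⁻ x, ENNReal.ofReal (f (x, y)) ∂P ∂(Measure.pi fun _ => P)
      = ∫⁻ p in Set.univ ×ˢ s, ENNReal.ofReal (f p) ∂P.prod (Measure.pi fun _ => P) := by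
        rw [← Measure.prod_restrict, Measure.restrict_univ,
          lintegral_prod_symm _ hf.ennreal_ofReal.aemeasurable]
    _ = ∫⁻ ω in prefixMap d t ⁻¹' s, ENNReal.ofReal (M (t + 1) ω) ∂μ := by
        rw [hcyl, hfM]
        exact ((hμ.measurePreserving_nextAndPrefix t).setLIntegral_comp_preimage
          (MeasurableSet.univ.prod hs) hf.ennreal_ofReal).symm
    _ ≤ ∫⁻ ω in prefixMap d t ⁻¹' s, ENNReal.ofReal (M t ω) ∂μ := by
        rw [← hint, ← hint]
        exact ENNReal.ofReal_le_ofReal (hM.2.setIntegral_le t.le_succ hpast)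
    _ = ∫⁻ y in s, ENNReal.ofReal (g y) ∂(Measure.pi fun _ => P) := by
        rw [hgM]
        exact (hμ.measurePreserving_prefixMap t).setLIntegral_comp_preimage hs hg.ennreal_ofReal

end CoordinateProcess

section Test

variable {d} {PP : Set (Measure (RV d))} {γ : Measure (RV d)} {Γ : Measure (Seq d)}
  {M : ℕ → Seq d → ℝ}

theorem ae_succ_le_of_forall_isNSM (hγ : γ ≪ volume) (hγ' : volume ≪ γ)
    (hPP : ∀ m, ∀ r > 0, scaledTranslate γ m r ∈ PP) (hΓ : IsIIDLaw d Γ γ)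
    (hM : ∀ P ∈ PP, ∀ μ, IsIIDLaw d μ P → IsNSM d μ M) (t : ℕ) :
    ∀ᵐ ω ∂Γ, M (t + 1) ω ≤ M t ω := by
  have := hΓ.isProbabilityMeasure_marginal
  have hMΓ : IsNSM d Γ M := hM γ (scaledTranslate_zero_one γ ▸ hPP 0 1 one_pos) Γ hΓ
  obtain ⟨f, hf, hfM⟩ :=
    exists_measurable_eq_comp_nextAndPrefix (hMΓ.2.stronglyAdapted (t + 1))
  obtain ⟨g, hg, hgM⟩ := exists_measurable_eq_comp_prefixMap (hMΓ.2.stronglyAdapted t)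
  have hstep (n : ℕ) (m : RV d) : ∀ᵐ y : Fin t → RV d,
      ∫⁻ x, ENNReal.ofReal (f (x, y)) ∂scaledTranslate γ m (1 / ((n : ℝ) + 1)) ≤
        ENNReal.ofReal (g y) := by
    have hr : 0 < 1 / ((n : ℝ) + 1) := Nat.one_div_pos_of_nat
    have hiid := isIIDLaw_infinitePi (scaledTranslate γ m (1 / ((n : ℝ) + 1)))
    exact (pi_absolutelyContinuous fun _ =>
      absolutelyContinuous_scaledTranslate volume hγ' m hr.ne').ae_le
        ((hM _ (hPP m _ hr) _ hiid).ae_lintegral_next_le hiid hf hfM hg hgM)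
  have hle : ∀ᵐ p ∂(volume : Measure (RV d)).prod (volume : Measure (Fin t → RV d)),
      ENNReal.ofReal (f p) ≤ ENNReal.ofReal (g p.2) :=
    ae_prod_le_of_forall_ae_lintegral_scaledTranslate_le volume volume γ hf.ennreal_ofReal
      hg.ennreal_ofReal tendsto_one_div_add_atTop_nhds_zero_nat hstep
  have hac : γ.prod (Measure.pi fun _ : Fin t => γ) ≪ volume.prod volume :=
    hγ.prod (pi_absolutelyContinuous fun _ => hγ)
  filter_upwards [(hΓ.measurePreserving_nextAndPrefix t).quasiMeasurePreserving.ae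
    (hac.ae_le hle)] with ω hω
  have hnonneg : 0 ≤ g (prefixMap d t ω) := (hMΓ.1 t ω).trans_eq (congrFun hgM ω)
  rw [hfM, hgM]
  exact (ENNReal.ofReal_le_ofReal_iff hnonneg).1 hω

variable (M) in
theorem statement11_general (hγ : γ ≪ volume) (hγ' : volume ≪ γ)
    (hPP : ∀ m, ∀ r > 0, scaledTranslate γ m r ∈ PP) (hΓ : IsIIDLaw d Γ γ) :
    ((∀ P ∈ PP, ∀ μ, IsIIDLaw d μ P → IsNSM d μ M) →
      Γ {ω | ∃ t, 1 ≤ t ∧ M (t - 1) ω < M t ω} = 0) ∧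
    ((∀ P ∈ PP, ∀ μ, IsIIDLaw d μ P → IsNM d μ M) →
      Γ {ω | ∃ t, 1 ≤ t ∧ M t ω ≠ M (t - 1) ω} = 0) := by
  refine ⟨fun hM => ?_, fun hM => ?_⟩
  · have hle := ae_all_iff.2 (ae_succ_le_of_forall_isNSM hγ hγ' hPP hΓ hM)
    refine measure_mono_null ?_ (ae_iff.1 hle)
    rintro ω ⟨t, ht, hlt⟩ h
    obtain ⟨s, rfl⟩ := Nat.exists_eq_add_of_le' ht
    exact (h s).not_gt hlt
  · have hle := ae_succ_le_of_forall_isNSM hγ hγ' hPP hΓ fun P hP μ hμ =>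
      ⟨(hM P hP μ hμ).1, (hM P hP μ hμ).2.supermartingale⟩
    have hMΓ : IsNM d Γ M := hM γ (scaledTranslate_zero_one γ ▸ hPP 0 1 one_pos) Γ hΓ
    have := hΓ.1
    have heq := ae_all_iff.2 fun t => ae_eq_of_martingale_of_ae_le hMΓ.2 t.le_succ (hle t)
    refine measure_mono_null ?_ (ae_iff.1 heq)
    rintro ω ⟨t, ht, hne⟩ h
    obtain ⟨s, rfl⟩ := Nat.exists_eq_add_of_le' ht
    exact hne (h s)

end Test

/-- There are no nontrivial test supermartingales (or martingales) for the
i.i.d. Gaussian laws, and a fortiori none for the i.i.d. log-concave laws. -/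
theorem statement11 (Γ : Measure (Seq d)) (hΓ : IsGamma d Γ) (M : ℕ → Seq d → ℝ) :
    ((∀ P ∈ gaussianLaws d, ∀ μ : Measure (Seq d), IsIIDLaw d μ P → IsNSM d μ M) →
      Γ {ω | ∃ t : ℕ, 1 ≤ t ∧ M (t - 1) ω < M t ω} = 0) ∧
    ((∀ P ∈ gaussianLaws d, ∀ μ : Measure (Seq d), IsIIDLaw d μ P → IsNM d μ M) →
      Γ {ω | ∃ t : ℕ, 1 ≤ t ∧ M t ω ≠ M (t - 1) ω} = 0) ∧
    ((∀ P ∈ logConcaveLaws d, ∀ μ : Measure (Seq d), IsIIDLaw d μ P → IsNSM d μ M) →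
      Γ {ω | ∃ t : ℕ, 1 ≤ t ∧ M (t - 1) ω < M t ω} = 0) ∧
    ((∀ P ∈ logConcaveLaws d, ∀ μ : Measure (Seq d), IsIIDLaw d μ P → IsNM d μ M) →
      Γ {ω | ∃ t : ℕ, 1 ≤ t ∧ M t ω ≠ M (t - 1) ω} = 0) := by
  obtain ⟨hsuper, hmart⟩ := statement11_general M stdGaussian_absolutelyContinuous_volume
    volume_absolutelyContinuous_stdGaussian
    (fun m _ hr => scaledTranslate_stdGaussian_mem_gaussianLaws m hr.ne') hΓ
  exact ⟨hsuper, hmart,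
    fun hM => hsuper fun P hP => hM P (gaussianLaws_subset_logConcaveLaws hP),
    fun hM => hmart fun P hP => hM P (gaussianLaws_subset_logConcaveLaws hP)⟩

end SeqTest
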